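/- If a one-dimensional linear code over a finite field is a left group code, then it is a cyclic group code, i.e., a left G-code for G a cyclic group. -/

import Mathlib

/-- Action of a permutation on a vector by permuting coordinates: `σ(e_i) = e_{σ(i)}`. -/
def permVec {n : ℕ} {F : Type*} (σ : Equiv.Perm (Fin n)) (x : Fin n → F) : Fin n → F :=
  fun i => x (σ.symm i)

/-- The group of permutation automorphisms of a linear code `C`, as a set of permutations. -/
def PAutSet {F : Type*} [Field F] {n : ℕ} (C : Submodule F (Fin n → F)) :
    Set (Equiv.Perm (Fin n)) :=
  {σ | ∀ x : Fin n → F, x ∈ C ↔ permVec σ x ∈ C}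

/-- A subgroup of `S_n` is regular if it is transitive and has order `n`. -/
def IsRegularSubgroup {n : ℕ} (H : Subgroup (Equiv.Perm (Fin n))) : Prop :=
  (∀ i j : Fin n, ∃ h ∈ H, h i = j) ∧ Nat.card H = n

/-- `C` is a left `G`-code: some bijection of the standard basis with `G` carries `C`
to a left ideal of the group algebra `F G` (equivalently, the image subspace is stable
under left multiplication by every group element). -/
def IsLeftGCode {F : Type*} [Field F] {n : ℕ} (G : Type*) [Group G]
    (C : Submodule F (Fin n → F)) : Prop :=
  ∃ φ : Fin n ≃ G, ∀ g : G, ∀ x ∈ C, (fun i => x (φ.symm (g * φ i))) ∈ C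

/-- `C` is a (two-sided) `G`-code: some bijection of the standard basis with `G` carries `C`
to a two-sided ideal of the group algebra `F G`. -/
def IsGCode {F : Type*} [Field F] {n : ℕ} (G : Type*) [Group G]
    (C : Submodule F (Fin n → F)) : Prop :=
  ∃ φ : Fin n ≃ G, ∀ g : G, ∀ x ∈ C,
    (fun i => x (φ.symm (g * φ i))) ∈ C ∧ (fun i => x (φ.symm (φ i * g))) ∈ C

theorem aux_equiv {G H R : Type*} [Group G] [Group H] [Group R] [Finite G] [Finite H]
    (f : G →* R) (g : H →* R) (hf : Function.Surjective f) (hg : Function.Surjective g)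
    (hc : Nat.card G = Nat.card H) : ∃ e : G ≃ H, ∀ a, g (e a) = f a := by
  have h1 := f.ker.card_mul_index
  have h2 := g.ker.card_mul_index
  rw [Subgroup.index_ker, MonoidHom.range_eq_top.2 hf] at h1
  rw [Subgroup.index_ker, MonoidHom.range_eq_top.2 hg] at h2
  have : Finite R := Finite.of_surjective f hf
  have hk : Nat.card f.ker = Nat.card g.ker := by
    have hpos : 0 < Nat.card (⊤ : Subgroup R) := Nat.card_pos
    exact Nat.eq_of_mul_eq_mul_right hpos (by rw [h1, h2, hc])
  have hfib : ∀ c : R, Nonempty ({a // f a = c} ≃ {b // g b = c}) := fun c =>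
    ⟨(f.fiberEquivKerOfSurjective hf c).trans
      ((Finite.card_eq.1 hk).some.trans (g.fiberEquivKerOfSurjective hg c).symm)⟩
  exact ⟨Equiv.ofFiberEquiv fun c => (hfib c).some, fun a => Equiv.ofFiberEquiv_map _ a⟩

/-- If a one-dimensional code is a left group code then it is a cyclic group code,
i.e. a left `G`-code for `G` the cyclic group of order `n`. -/
theorem stmt12 {F : Type*} [Field F] [Fintype F] {n : ℕ} (v : Fin n → F) (hv : v ≠ 0)
    (hcode : ∃ (G : Type) (inst : Group G), @IsLeftGCode F _ n G inst (Submodule.span F {v})) :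
    IsLeftGCode (Multiplicative (ZMod n)) (Submodule.span F {v}) := by
  obtain ⟨G, inst, φ, hφ⟩ := hcode
  have hn : NeZero n := ⟨by rintro rfl; exact hv (Subsingleton.elim _ _)⟩
  have : Finite G := Finite.of_equiv _ φ
  have hcard : Nat.card G = n := by rw [← Nat.card_congr φ]; simp
  have h0 : ∀ g : G, ∃ c : F, ∀ a : G, v (φ.symm (g * a)) = c * v (φ.symm a) := by
    intro g
    obtain ⟨c, hc⟩ := Submodule.mem_span_singleton.1
      (hφ g v (Submodule.mem_span_singleton_self v))
    refine ⟨c, fun a => ?_⟩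
    have := congrFun hc (φ.symm a)
    simpa using this.symm
  choose l hl using h0
  have hw : v (φ.symm 1) ≠ 0 := by
    intro h
    apply hv
    funext i
    have := hl (φ i) 1
    simpa [h] using this
  let L0 : G →* F :=
    { toFun := l
      map_one' := by
        have := hl 1 1
        rw [one_mul] at this
        exact mul_right_cancel₀ hw (by rw [← this, one_mul])
      map_mul' := fun a b => by
        apply mul_right_cancel₀ hw
        rw [← hl, mul_assoc, hl, hl, mul_assoc] }
  let L : G →* Fˣ := L0.toHomUnits
  have hL : ∀ a, ((L a : Fˣ) : F) = l a := fun a => rfl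
  let R := L.range
  have hdvd : Nat.card R ∣ n := by
    rw [← hcard]; exact Subgroup.card_range_dvd L
  let χ0 : Multiplicative (ZMod n) →* Multiplicative (ZMod (Nat.card R)) :=
    AddMonoidHom.toMultiplicative (ZMod.castHom hdvd (ZMod (Nat.card R))).toAddMonoidHom
  have hχ0 : Function.Surjective χ0 := ZMod.castHom_surjective hdvd
  have hR : IsCyclic R := inferInstance
  let E := zmodCyclicMulEquiv hR
  obtain ⟨e, he⟩ := aux_equiv L.rangeRestrict (E.toMonoidHom.comp χ0)
    L.rangeRestrict_surjective (E.surjective.comp hχ0) (by rw [hcard]; simp)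
  have he' : ∀ z, l (e.symm z) = ((E (χ0 z) : R) : Fˣ) := by
    intro z
    have := he (e.symm z)
    rw [Equiv.apply_symm_apply] at this
    rw [← hL]
    exact congrArg (fun r : R => ((r : Fˣ) : F)) this.symm
  have hv' : ∀ a, v (φ.symm a) = l a * v (φ.symm 1) := fun a => by
    rw [← hl, mul_one]
  refine ⟨φ.trans e, fun g x hx => ?_⟩
  obtain ⟨c, rfl⟩ := Submodule.mem_span_singleton.1 hx
  refine Submodule.mem_span_singleton.2 ⟨c * l (e.symm g), ?_⟩
  funext i
  have h3 : l (e.symm (g * e (φ i))) = l (e.symm g) * l (φ i) := by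
    rw [he', map_mul, map_mul, Subgroup.coe_mul, Units.val_mul, ← he', ← he',
      Equiv.symm_apply_apply]
  have h4 : v i = l (φ i) * v (φ.symm 1) := by rw [← hv']; simp
  simp only [Pi.smul_apply, smul_eq_mul, Equiv.symm_trans_apply, Equiv.trans_apply]
  rw [hv', h3, h4]
  ring
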